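/- Let B ⊆ R^n be a convex body with enough symmetries. The following are equivalent: (1) the cone C_B is resilient; (2) every isotropic map I_{α,β} = α π1 + β π2 on R^{n+1} which is (C_B,C_B)-entanglement annihilating is (C_B,C_B)-entanglement breaking. -/

import Mathlib

open scoped TensorProduct
open Set

noncomputable section

/-- The dual cone of a set `C`, inside the algebraic dual space. -/
def dualConeSet {V : Type*} [AddCommGroup V] [Module ℝ V] (C : Set V) :
    Set (Module.Dual ℝ V) := {φ | ∀ x ∈ C, 0 ≤ φ x}

/-- A proper cone: a closed convex cone which is generating (`C - C = V`) and
pointed (`C ∩ (-C) = {0}`). -/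
def IsProperCone {V : Type*} [NormedAddCommGroup V] [NormedSpace ℝ V] (C : Set V) : Prop :=
  IsClosed C ∧ Convex ℝ C ∧ (∀ ⦃c : ℝ⦄, 0 < c → ∀ ⦃x⦄, x ∈ C → c • x ∈ C) ∧
    (∀ v : V, ∃ x ∈ C, ∃ y ∈ C, v = x - y) ∧ C ∩ (-C) = {0}

/-- `(C₁,C₂)`-entanglement breaking maps. -/
def IsEntanglementBreaking {V₁ V₂ : Type*} [AddCommGroup V₁] [Module ℝ V₁]
    [AddCommGroup V₂] [Module ℝ V₂] (C₁ : Set V₁) (C₂ : Set V₂) (P : V₁ →ₗ[ℝ] V₂) : Prop :=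
  ∃ (m : ℕ) (φ : Fin m → Module.Dual ℝ V₁) (x : Fin m → V₂),
    (∀ i, φ i ∈ dualConeSet C₁) ∧ (∀ i, x i ∈ C₂) ∧ ∀ v, P v = ∑ i, φ i v • x i

/-- The `k`-fold minimal tensor power of a cone. -/
def minTensorPow {V : Type*} [AddCommGroup V] [Module ℝ V] (C : Set V) (k : ℕ) :
    Set (⨂[ℝ] _ : Fin k, V) :=
  convexHull ℝ {z | ∃ x : Fin k → V, (∀ i, x i ∈ C) ∧ z = PiTensorProduct.tprod ℝ x}

/-- The functional on the `k`-fold tensor power induced by a family of functionals,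
`x₁ ⊗ ⋯ ⊗ x_k ↦ ∏ i, φ i (x i)`. -/
def dualPairing {V : Type*} [AddCommGroup V] [Module ℝ V] {k : ℕ}
    (φ : Fin k → Module.Dual ℝ V) : (⨂[ℝ] _ : Fin k, V) →ₗ[ℝ] ℝ :=
  PiTensorProduct.lift ((MultilinearMap.mkPiAlgebra ℝ (Fin k) ℝ).compLinearMap φ)

/-- The `k`-fold maximal tensor power of a cone: the dual of the minimal tensor power of
the dual cone, under the canonical identification of `(V^{⊗k})*` with `(V*)^{⊗k}`. -/
def maxTensorPow {V : Type*} [AddCommGroup V] [Module ℝ V] (C : Set V) (k : ℕ) :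
    Set (⨂[ℝ] _ : Fin k, V) :=
  {z | ∀ φ : Fin k → Module.Dual ℝ V, (∀ i, φ i ∈ dualConeSet C) → 0 ≤ dualPairing φ z}

/-- `(C₁,C₂)`-entanglement annihilating maps: `P^{⊗k}` maps the `k`-fold maximal tensor power
of `C₁` into the `k`-fold minimal tensor power of `C₂`, for every `k ≥ 1`. -/
def IsEntanglementAnnihilating {V₁ V₂ : Type*} [AddCommGroup V₁] [Module ℝ V₁]
    [AddCommGroup V₂] [Module ℝ V₂] (C₁ : Set V₁) (C₂ : Set V₂) (P : V₁ →ₗ[ℝ] V₂) : Prop :=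
  ∀ k : ℕ, 1 ≤ k →
    Set.MapsTo (⇑(PiTensorProduct.map fun _ : Fin k => P))
      (maxTensorPow C₁ k) (minTensorPow C₂ k)

/-- A pair of cones is resilient if every entanglement annihilating map between them is
entanglement breaking. -/
def IsResilientPair {V₁ V₂ : Type*} [AddCommGroup V₁] [Module ℝ V₁]
    [AddCommGroup V₂] [Module ℝ V₂] (C₁ : Set V₁) (C₂ : Set V₂) : Prop :=
  ∀ P : V₁ →ₗ[ℝ] V₂, IsEntanglementAnnihilating C₁ C₂ P → IsEntanglementBreaking C₁ C₂ P

/-- The minimal tensor product of two cones. -/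
def minTensor {V W : Type*} [AddCommGroup V] [Module ℝ V] [AddCommGroup W] [Module ℝ W]
    (C : Set V) (D : Set W) : Set (V ⊗[ℝ] W) :=
  convexHull ℝ {z | ∃ x ∈ C, ∃ y ∈ D, z = x ⊗ₜ[ℝ] y}

/-- The maximal tensor product of two cones: the dual of the minimal tensor product of the
dual cones, under the canonical identification of `(V ⊗ W)*` with `V* ⊗ W*`. -/
def maxTensor {V W : Type*} [AddCommGroup V] [Module ℝ V] [AddCommGroup W] [Module ℝ W]
    (C : Set V) (D : Set W) : Set (V ⊗[ℝ] W) :=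
  {z | ∀ φ ∈ dualConeSet C, ∀ ψ ∈ dualConeSet D,
      0 ≤ TensorProduct.dualDistrib ℝ V W (φ ⊗ₜ[ℝ] ψ) z}

/-- The Lorentz cone `L_n ⊆ ℝ ⊕ ℝⁿ`. -/
def lorentzCone (n : ℕ) : Set (ℝ × EuclideanSpace ℝ (Fin n)) := {p | ‖p.2‖ ≤ p.1}

open scoped Pointwise

/-- A convex body: a compact convex set with nonempty interior. -/
def IsConvexBody (n : ℕ) (B : Set (Fin n → ℝ)) : Prop :=
  IsCompact B ∧ Convex ℝ B ∧ (interior B).Nonempty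

/-- The isometry group of `B`: orthogonal matrices mapping `B` onto itself. -/
def isoSet (n : ℕ) (B : Set (Fin n → ℝ)) : Set (Matrix (Fin n) (Fin n) ℝ) :=
  {g | g ∈ Matrix.orthogonalGroup (Fin n) ℝ ∧ (fun x => g.mulVec x) '' B = B}

/-- `B` has enough symmetries: the only matrices commuting with all of `Iso(B)` are the
real multiples of the identity. -/
def EnoughSymmetries (n : ℕ) (B : Set (Fin n → ℝ)) : Prop :=
  ∀ S : Matrix (Fin n) (Fin n) ℝ, (∀ g ∈ isoSet n B, g * S = S * g) →
    ∃ c : ℝ, S = c • (1 : Matrix (Fin n) (Fin n) ℝ)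

/-- The cone over a convex body `B`: `C_B = {(t,x) : t ≥ 0, x ∈ tB} ⊆ ℝ ⊕ ℝⁿ`. -/
def coneOverBody (n : ℕ) (B : Set (Fin n → ℝ)) : Set (ℝ × (Fin n → ℝ)) :=
  {p | 0 ≤ p.1 ∧ p.2 ∈ p.1 • B}

/-- The isotropic map `I_{α,β} = α π₁ + β π₂ : (t,x) ↦ (αt, βx)`. -/
def isotropicMap (n : ℕ) (α β : ℝ) : (ℝ × (Fin n → ℝ)) →ₗ[ℝ] (ℝ × (Fin n → ℝ)) :=
  LinearMap.prodMap (α • LinearMap.id) (β • LinearMap.id)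

/-!
Over proper cones the entanglement breaking maps form a closed convex cone, because its normalized
rank-one generators are compact and `0` is not in their convex hull. So a map `P` on `ℝ ⊕ ℝⁿ` that
is not entanglement breaking is separated from that cone by a functional `X ↦ tr (Q X)`; testing it
on rank-one maps shows that `Q` maps `C_B` into itself, while `tr (Q P) < 0`. If `P` is entanglement
annihilating, so is `Q P`, and so is every map in the convex hull of the conjugates of `Q P` under
`1 ⊕ Iso(B)`. This hull contains a map commuting with `1 ⊕ Iso(B)`, which for `n ≥ 2` is isotropic
since `B` has enough symmetries. It has the same negative trace, whereas entanglement breaking maps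
have nonnegative trace. For `n = 1` the commutant of `1 ⊕ Iso(B)` may contain non-isotropic maps,
but then `C_B` is simplicial: the identity is entanglement breaking, hence so is every positive map.
-/

/-! ### Convex hulls and hulls of cones -/

theorem exists_stdSimplex_sum_smul_eq_of_mem_convexHull {E : Type*} [AddCommGroup E] [Module ℝ E]
    [FiniteDimensional ℝ E] {s : Set E} {x : E} (hx : x ∈ convexHull ℝ s) :
    ∃ w ∈ stdSimplex ℝ (Fin (Module.finrank ℝ E + 1)), ∃ z : Fin (Module.finrank ℝ E + 1) → E,
      (∀ i, z i ∈ s) ∧ ∑ i, w i • z i = x := by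
  obtain ⟨ι, _, z, w, hz, hind, hw, hw₁, rfl⟩ := eq_pos_convex_span_of_mem_convexHull hx
  have hι : Nonempty ι := by
    by_contra! h
    simp at hw₁
  obtain ⟨e⟩ : Nonempty (ι ↪ Fin (Module.finrank ℝ E + 1)) := by
    refine Function.Embedding.nonempty_of_card_le ?_
    simpa using hind.card_le_finrank_succ.trans (by gcongr; exact Submodule.finrank_le _)
  have hw_off : ∀ i ∉ range e, Function.extend e w 0 i = 0 := fun i hi =>
    Function.extend_apply' _ _ _ hi
  refine ⟨Function.extend e w 0, ⟨fun i => ?_, ?_⟩, z ∘ Function.invFun e,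
    fun i => hz (mem_range_self _), ?_⟩
  · by_cases hi : i ∈ range e
    · obtain ⟨a, rfl⟩ := hi
      simpa only [e.injective.extend_apply] using (hw a).le
    · exact (hw_off i hi).ge
  · rw [← hw₁]
    exact (Fintype.sum_of_injective e e.injective _ _ hw_off fun a =>
      (e.injective.extend_apply w 0 a).symm).symm
  · refine (Fintype.sum_of_injective e e.injective _ _ (fun i hi => ?_) fun a => ?_).symm
    · rw [hw_off i hi, zero_smul]
    · rw [e.injective.extend_apply, Function.comp_apply,
        Function.leftInverse_invFun e.injective]

theorem isCompact_convexHull {E : Type*} [AddCommGroup E] [Module ℝ E] [TopologicalSpace E]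
    [IsTopologicalAddGroup E] [ContinuousSMul ℝ E] [FiniteDimensional ℝ E] {s : Set E}
    (hs : IsCompact s) : IsCompact (convexHull ℝ s) := by
  have hcompact : IsCompact
      ((fun p : (Fin (Module.finrank ℝ E + 1) → ℝ) × (Fin (Module.finrank ℝ E + 1) → E) =>
        ∑ i, p.1 i • p.2 i) '' stdSimplex ℝ _ ×ˢ univ.pi fun _ => s) :=
    ((isCompact_stdSimplex ℝ _).prod (isCompact_univ_pi fun _ => hs)).image (by fun_prop)
  convert hcompact
  apply Subset.antisymm
  · intro x hx
    obtain ⟨w, hw, z, hz, rfl⟩ := exists_stdSimplex_sum_smul_eq_of_mem_convexHull hx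
    exact ⟨(w, z), ⟨hw, fun i _ => hz i⟩, rfl⟩
  · rintro _ ⟨⟨w, z⟩, ⟨⟨hw₀, hw₁⟩, hz⟩, rfl⟩
    exact (convex_convexHull ℝ s).sum_mem (fun i _ => hw₀ i) hw₁
      fun i _ => subset_convexHull ℝ s (hz i trivial)

theorem mem_hull_iff_exists_smul_mem_convexHull {E : Type*} [AddCommGroup E] [Module ℝ E]
    {s : Set E} (hs : s.Nonempty) {x : E} :
    x ∈ PointedCone.hull ℝ s ↔ ∃ c : ℝ, 0 ≤ c ∧ ∃ y ∈ convexHull ℝ s, c • y = x := by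
  constructor
  · intro hx
    induction hx using Submodule.span_induction with
    | mem x hx => exact ⟨1, zero_le_one, x, subset_convexHull ℝ s hx, one_smul ℝ x⟩
    | zero =>
      obtain ⟨y, hy⟩ := hs
      exact ⟨0, le_rfl, y, subset_convexHull ℝ s hy, zero_smul ℝ y⟩
    | add x y _ _ hx hy =>
      obtain ⟨a, ha, x, hx, rfl⟩ := hx
      obtain ⟨b, hb, y, hy, rfl⟩ := hy
      obtain ⟨z, hz, hz_eq⟩ := (convex_convexHull ℝ s).exists_mem_add_smul_eq hx hy ha hb
      exact ⟨a + b, add_nonneg ha hb, z, hz, hz_eq⟩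
    | smul a x _ hx =>
      obtain ⟨c, hc, x, hx, rfl⟩ := hx
      exact ⟨a * c, mul_nonneg a.2 hc, x, hx, mul_smul (a : ℝ) c x⟩
  · rintro ⟨c, hc, y, hy, rfl⟩
    exact PointedCone.smul_mem _ hc
      (convexHull_min PointedCone.subset_hull (PointedCone.convex _) hy)

theorem isClosed_hull_of_isCompact {E : Type*} [NormedAddCommGroup E] [NormedSpace ℝ E]
    [FiniteDimensional ℝ E] {s : Set E} (hs : IsCompact s) (h₀ : (0 : E) ∉ convexHull ℝ s) :
    IsClosed (PointedCone.hull ℝ s : Set E) := by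
  rcases s.eq_empty_or_nonempty with rfl | hne
  · simp
  have hK := isCompact_convexHull hs
  obtain ⟨f, u, hu₀, hu⟩ :=
    geometric_hahn_banach_point_closed (convex_convexHull ℝ s) hK.isClosed h₀
  rw [map_zero] at hu₀
  refine isClosed_of_closure_subset fun x hx => ?_
  -- Where `f` is bounded, so are the scaling factors: that part of the cone lies in a compact set.
  let truncation : Set E :=
    (fun p : ℝ × E => p.1 • p.2) '' Icc 0 ((f x + 1) / u) ×ˢ convexHull ℝ s
  have htruncation : IsCompact truncation := (isCompact_Icc.prod hK).image (by fun_prop)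
  have hsub : {y | f y < f x + 1} ∩ PointedCone.hull ℝ s ⊆ truncation := by
    rintro _ ⟨hlt, hmem⟩
    obtain ⟨c, hc, y, hy, rfl⟩ := (mem_hull_iff_exists_smul_mem_convexHull hne).1 hmem
    refine ⟨(c, y), ⟨⟨hc, (le_div_iff₀ hu₀).2 ?_⟩, hy⟩, rfl⟩
    calc c * u ≤ c * f y := by gcongr; exact (hu y hy).le
      _ = f (c • y) := (map_smul f c y).symm
      _ ≤ f x + 1 := le_of_lt hlt
  have hopen : IsOpen {y | f y < f x + 1} := isOpen_lt f.continuous continuous_const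
  obtain ⟨⟨c, y⟩, ⟨hc, hy⟩, rfl⟩ := closure_minimal hsub htruncation.isClosed
    (hopen.inter_closure ⟨lt_add_one (f x), hx⟩)
  exact (mem_hull_iff_exists_smul_mem_convexHull hne).2 ⟨c, hc.1, y, hy, rfl⟩

/-! ### Proper cones -/

namespace IsProperCone

variable {V : Type*} [NormedAddCommGroup V] [NormedSpace ℝ V] {C : Set V} {x y : V}

theorem zero_mem (hC : IsProperCone C) : (0 : V) ∈ C :=
  (hC.2.2.2.2.symm.subset rfl).1

theorem nonneg_smul_mem (hC : IsProperCone C) {c : ℝ} (hc : 0 ≤ c) (hx : x ∈ C) : c • x ∈ C := by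
  rcases hc.eq_or_lt with rfl | hc
  · simpa only [zero_smul] using hC.zero_mem
  · exact hC.2.2.1 hc hx

theorem add_mem (hC : IsProperCone C) (hx : x ∈ C) (hy : y ∈ C) : x + y ∈ C := by
  obtain ⟨z, hz, hz_eq⟩ := hC.2.1.exists_mem_add_smul_eq hx hy zero_le_one zero_le_one
  rw [one_smul, one_smul] at hz_eq
  exact hz_eq ▸ hC.nonneg_smul_mem (by norm_num) hz

theorem eq_zero_of_neg_mem (hC : IsProperCone C) (hx : x ∈ C) (hx' : -x ∈ C) : x = 0 :=
  hC.2.2.2.2.subset ⟨hx, hx'⟩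

theorem mem_of_forall_dual_nonneg (hC : IsProperCone C)
    (hx : ∀ φ ∈ dualConeSet C, 0 ≤ φ x) : x ∈ C := by
  let K : ProperCone ℝ V :=
    { carrier := C
      zero_mem' := hC.zero_mem
      add_mem' := hC.add_mem
      smul_mem' := fun c _ hy => hC.nonneg_smul_mem c.2 hy
      isClosed' := hC.1 }
  by_contra hxC
  obtain ⟨f, hf, hfx⟩ := ProperCone.hyperplane_separation_point K hxC
  exact hfx.not_ge (hx f.toLinearMap hf)

theorem linearMap_eq_zero {W : Type*} [AddCommGroup W] [Module ℝ W] (hC : IsProperCone C)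
    {T : V →ₗ[ℝ] W} (h : ∀ x ∈ C, T x = 0) : T = 0 := by
  ext v
  obtain ⟨x, hx, y, hy, rfl⟩ := hC.2.2.2.1 v
  rw [map_sub, h x hx, h y hy, sub_self, LinearMap.zero_apply]

end IsProperCone

/-! ### Entanglement breaking maps -/

/-- The rank-one maps `v ↦ φ v • x` with `φ` in the dual of `C₁` and `x` in `C₂`; the entanglement
breaking maps are the convex cone they generate. -/
def positiveRankOneMaps {V₁ V₂ : Type*} [AddCommGroup V₁] [Module ℝ V₁] [AddCommGroup V₂]
    [Module ℝ V₂] (C₁ : Set V₁) (C₂ : Set V₂) : Set (V₁ →ₗ[ℝ] V₂) :=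
  image2 LinearMap.smulRight (dualConeSet C₁) C₂

theorem isEntanglementBreaking_iff_mem_hull {V₁ V₂ : Type*} [AddCommGroup V₁] [Module ℝ V₁]
    [AddCommGroup V₂] [Module ℝ V₂] {C₁ : Set V₁} {C₂ : Set V₂} {P : V₁ →ₗ[ℝ] V₂} :
    IsEntanglementBreaking C₁ C₂ P ↔ P ∈ PointedCone.hull ℝ (positiveRankOneMaps C₁ C₂) := by
  constructor
  · rintro ⟨m, φ, x, hφ, hx, hP⟩
    obtain rfl : P = ∑ i, (φ i).smulRight (x i) := by
      ext v
      simp [hP]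
    exact Submodule.sum_mem _ fun i _ => PointedCone.subset_hull ⟨φ i, hφ i, x i, hx i, rfl⟩
  · intro hP
    obtain ⟨m, c, T, rfl⟩ := Submodule.mem_span_set'.1 hP
    choose φ hφ x hx hT using fun i => (T i).2
    refine ⟨m, fun i => (c i : ℝ) • φ i, x, fun i v hv => ?_, hx, fun v => ?_⟩
    · exact mul_nonneg (c i).2 (hφ i v hv)
    · simp only [LinearMap.sum_apply, ← hT]
      exact Finset.sum_congr rfl fun i _ => (mul_smul (c i : ℝ) (φ i v) (x i)).symm

namespace IsEntanglementBreaking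

variable {V₁ V₂ V₃ : Type*} [AddCommGroup V₁] [Module ℝ V₁] [AddCommGroup V₂] [Module ℝ V₂]
  [AddCommGroup V₃] [Module ℝ V₃] {C₁ : Set V₁} {C₂ : Set V₂} {C₃ : Set V₃}

theorem trace_nonneg [FiniteDimensional ℝ V₁] {P : V₁ →ₗ[ℝ] V₁}
    (hP : IsEntanglementBreaking C₁ C₁ P) : 0 ≤ LinearMap.trace ℝ V₁ P := by
  have hle : PointedCone.hull ℝ (positiveRankOneMaps C₁ C₁) ≤
      (PointedCone.positive ℝ ℝ).comap (LinearMap.trace ℝ V₁) := by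
    refine Submodule.span_le.2 ?_
    rintro _ ⟨φ, hφ, x, hx, rfl⟩
    exact (hφ x hx).trans_eq (LinearMap.trace_smulRight φ x).symm
  exact hle (isEntanglementBreaking_iff_mem_hull.1 hP)

theorem comp_left {P : V₁ →ₗ[ℝ] V₂} (hP : IsEntanglementBreaking C₁ C₂ P) {Q : V₂ →ₗ[ℝ] V₃}
    (hQ : MapsTo Q C₂ C₃) : IsEntanglementBreaking C₁ C₃ (Q ∘ₗ P) := by
  obtain ⟨m, φ, x, hφ, hx, hP⟩ := hP
  exact ⟨m, φ, fun i => Q (x i), hφ, fun i => hQ (hx i), fun v => by simp [hP]⟩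

end IsEntanglementBreaking

section Closed

variable {V₁ V₂ : Type*} [NormedAddCommGroup V₁] [NormedSpace ℝ V₁]
  [NormedAddCommGroup V₂] [NormedSpace ℝ V₂] {C₁ : Set V₁} {C₂ : Set V₂}

theorem IsProperCone.convex_setOf_mapsTo_ne_zero (hC₁ : IsProperCone C₁) (hC₂ : IsProperCone C₂) :
    Convex ℝ {T : V₁ →L[ℝ] V₂ | MapsTo T C₁ C₂ ∧ T ≠ 0} := by
  rw [convex_iff_forall_pos]
  rintro X ⟨hX, hX₀⟩ Y ⟨hY, -⟩ a b ha hb -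
  refine ⟨fun v hv => hC₂.add_mem (hC₂.nonneg_smul_mem ha.le (hX hv))
    (hC₂.nonneg_smul_mem hb.le (hY hv)), fun hsum => hX₀ ?_⟩
  have hX_zero : ∀ v ∈ C₁, X.toLinearMap v = 0 := fun v hv => by
    have hneg : -(a • X v) = b • Y v := by
      rw [neg_eq_iff_add_eq_zero]
      exact DFunLike.congr_fun hsum v
    refine (smul_eq_zero_iff_right ha.ne').1 (hC₂.eq_zero_of_neg_mem
      (hC₂.nonneg_smul_mem ha.le (hX hv)) ?_)
    rw [ContinuousLinearMap.coe_coe, hneg]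
    exact hC₂.nonneg_smul_mem hb.le (hY hv)
  exact ContinuousLinearMap.coe_injective (hC₁.linearMap_eq_zero hX_zero)

/-- The positive rank-one maps with both factors of norm one. On finite-dimensional spaces they
form a compact set generating the cone of entanglement breaking maps. -/
def normalizedRankOneMaps (C₁ : Set V₁) (C₂ : Set V₂) : Set (V₁ →L[ℝ] V₂) :=
  image2 ContinuousLinearMap.smulRight
    ({φ : StrongDual ℝ V₁ | ∀ x ∈ C₁, 0 ≤ φ x} ∩ Metric.sphere 0 1) (C₂ ∩ Metric.sphere 0 1)

theorem isCompact_normalizedRankOneMaps [FiniteDimensional ℝ V₁] [FiniteDimensional ℝ V₂]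
    (C₁ : Set V₁) (hC₂ : IsClosed C₂) : IsCompact (normalizedRankOneMaps C₁ C₂) := by
  have hdual : IsClosed {φ : StrongDual ℝ V₁ | ∀ x ∈ C₁, 0 ≤ φ x} := by
    simp only [ofPred_forall]
    exact isClosed_biInter fun x _ => isClosed_le continuous_const (by fun_prop)
  rw [normalizedRankOneMaps, ← image_uncurry_prod]
  exact (((isCompact_sphere 0 1).inter_left hdual).prod
    ((isCompact_sphere 0 1).inter_left hC₂)).image
    (ContinuousLinearMap.smulRightL ℝ V₁ V₂).continuous₂

theorem zero_notMem_convexHull_normalizedRankOneMaps (hC₁ : IsProperCone C₁)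
    (hC₂ : IsProperCone C₂) : (0 : V₁ →L[ℝ] V₂) ∉ convexHull ℝ (normalizedRankOneMaps C₁ C₂) := by
  have hsub : normalizedRankOneMaps C₁ C₂ ⊆ {T | MapsTo T C₁ C₂ ∧ T ≠ 0} := by
    rintro _ ⟨φ, ⟨hφ, hφ₁⟩, x, ⟨hx, hx₁⟩, rfl⟩
    refine ⟨fun v hv => hC₂.nonneg_smul_mem (hφ v hv) hx, norm_ne_zero_iff.1 ?_⟩
    rw [ContinuousLinearMap.norm_smulRight_apply, mem_sphere_zero_iff_norm.1 hφ₁,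
      mem_sphere_zero_iff_norm.1 hx₁, one_mul]
    exact one_ne_zero
  exact fun h => (convexHull_min hsub (hC₁.convex_setOf_mapsTo_ne_zero hC₂) h).2 rfl

theorem smulRight_mem_hull_normalizedRankOneMaps (hC₂ : IsProperCone C₂) {φ : StrongDual ℝ V₁}
    (hφ : ∀ x ∈ C₁, 0 ≤ φ x) {x : V₂} (hx : x ∈ C₂) :
    φ.smulRight x ∈ PointedCone.hull ℝ (normalizedRankOneMaps C₁ C₂) := by
  rcases eq_or_ne φ 0 with rfl | hφ₀
  · rw [show (0 : StrongDual ℝ V₁).smulRight x = 0 by ext; simp]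
    exact Submodule.zero_mem _
  rcases eq_or_ne x 0 with rfl | hx₀
  · rw [show φ.smulRight (0 : V₂) = 0 by ext; simp]
    exact Submodule.zero_mem _
  have hscale : φ.smulRight x =
      (‖φ‖ * ‖x‖) • (‖φ‖⁻¹ • φ).smulRight (‖x‖⁻¹ • x) := by
    ext v
    simp only [ContinuousLinearMap.smulRight_apply, smul_apply, smul_smul, smul_eq_mul]
    field_simp
  rw [hscale]
  refine PointedCone.smul_mem _ (by positivity) (PointedCone.subset_hull ⟨_, ⟨fun v hv => ?_, ?_⟩,
    _, ⟨hC₂.nonneg_smul_mem (by positivity) hx, ?_⟩, rfl⟩)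
  · exact mul_nonneg (by positivity) (hφ v hv)
  · exact mem_sphere_zero_iff_norm.2 (norm_smul_inv_norm (𝕜 := ℝ) hφ₀)
  · exact mem_sphere_zero_iff_norm.2 (norm_smul_inv_norm (𝕜 := ℝ) hx₀)

theorem isEntanglementBreaking_iff_mem_hull_normalizedRankOneMaps [FiniteDimensional ℝ V₁]
    (hC₂ : IsProperCone C₂) {T : V₁ →L[ℝ] V₂} :
    IsEntanglementBreaking C₁ C₂ T.toLinearMap ↔
      T ∈ PointedCone.hull ℝ (normalizedRankOneMaps C₁ C₂) := by
  rw [isEntanglementBreaking_iff_mem_hull]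
  constructor
  · have hle : PointedCone.hull ℝ (positiveRankOneMaps C₁ C₂) ≤
        (PointedCone.hull ℝ (normalizedRankOneMaps C₁ C₂)).comap
          (LinearMap.toContinuousLinearMap : (V₁ →ₗ[ℝ] V₂) ≃ₗ[ℝ] (V₁ →L[ℝ] V₂)).toLinearMap := by
      refine Submodule.span_le.2 ?_
      rintro _ ⟨φ, hφ, x, hx, rfl⟩
      exact smulRight_mem_hull_normalizedRankOneMaps hC₂
        (φ := LinearMap.toContinuousLinearMap φ) hφ hx
    exact fun hT => hle hT
  · have hle : PointedCone.hull ℝ (normalizedRankOneMaps C₁ C₂) ≤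
        (PointedCone.hull ℝ (positiveRankOneMaps C₁ C₂)).comap (ContinuousLinearMap.coeLM ℝ) := by
      refine Submodule.span_le.2 ?_
      rintro _ ⟨φ, ⟨hφ, -⟩, x, ⟨hx, -⟩, rfl⟩
      exact PointedCone.subset_hull ⟨φ.toLinearMap, hφ, x, hx, rfl⟩
    exact fun hT => hle hT

theorem isClosed_setOf_isEntanglementBreaking [FiniteDimensional ℝ V₁] [FiniteDimensional ℝ V₂]
    (hC₁ : IsProperCone C₁) (hC₂ : IsProperCone C₂) :
    IsClosed {T : V₁ →L[ℝ] V₂ | IsEntanglementBreaking C₁ C₂ T.toLinearMap} := by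
  simp only [isEntanglementBreaking_iff_mem_hull_normalizedRankOneMaps hC₂]
  exact isClosed_hull_of_isCompact (isCompact_normalizedRankOneMaps C₁ hC₂.1)
    (zero_notMem_convexHull_normalizedRankOneMaps hC₁ hC₂)

end Closed

/-! ### Trace duality -/

theorem trace_comp_smulRight {V W : Type*} [AddCommGroup V] [Module ℝ V] [FiniteDimensional ℝ V]
    [AddCommGroup W] [Module ℝ W] (Q : W →ₗ[ℝ] V) (φ : Module.Dual ℝ V) (w : W) :
    LinearMap.trace ℝ V (Q ∘ₗ φ.smulRight w) = φ (Q w) := by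
  rw [← LinearMap.trace_smulRight φ (Q w)]
  refine congrArg (LinearMap.trace ℝ V) (LinearMap.ext fun v => ?_)
  exact map_smul Q (φ v) w

theorem exists_forall_trace_comp_eq {V W : Type*} [AddCommGroup V] [Module ℝ V]
    [FiniteDimensional ℝ V] [AddCommGroup W] [Module ℝ W] [FiniteDimensional ℝ W]
    (f : Module.Dual ℝ (V →ₗ[ℝ] W)) :
    ∃ Q : W →ₗ[ℝ] V, ∀ P : V →ₗ[ℝ] W, LinearMap.trace ℝ V (Q ∘ₗ P) = f P := by
  let tracePairing : (W →ₗ[ℝ] V) →ₗ[ℝ] Module.Dual ℝ (V →ₗ[ℝ] W) :=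
    LinearMap.mk₂ ℝ (fun Q P => LinearMap.trace ℝ V (Q ∘ₗ P)) (by simp [LinearMap.add_comp])
      (by simp [LinearMap.smul_comp]) (by simp [LinearMap.comp_add]) (by simp [LinearMap.comp_smul])
  have hinj : Function.Injective tracePairing := by
    refine (injective_iff_map_eq_zero _).2 fun Q hQ => LinearMap.ext fun w => ?_
    refine (Module.forall_dual_apply_eq_zero_iff ℝ (Q w)).1 fun φ => ?_
    have := DFunLike.congr_fun hQ (φ.smulRight w)
    rwa [LinearMap.mk₂_apply, trace_comp_smulRight] at this
  have hfinrank : Module.finrank ℝ (W →ₗ[ℝ] V) = Module.finrank ℝ (Module.Dual ℝ (V →ₗ[ℝ] W)) := by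
    rw [Subspace.dual_finrank_eq, Module.finrank_linearMap, Module.finrank_linearMap, mul_comm]
  obtain ⟨Q, rfl⟩ := (LinearMap.injective_iff_surjective_of_finrank_eq_finrank hfinrank).1 hinj f
  exact ⟨Q, fun P => rfl⟩

theorem IsProperCone.exists_mapsTo_trace_comp_neg {V₁ V₂ : Type*} [NormedAddCommGroup V₁]
    [NormedSpace ℝ V₁] [FiniteDimensional ℝ V₁] [NormedAddCommGroup V₂] [NormedSpace ℝ V₂]
    [FiniteDimensional ℝ V₂] {C₁ : Set V₁} {C₂ : Set V₂} (hC₁ : IsProperCone C₁)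
    (hC₂ : IsProperCone C₂) {P : V₁ →ₗ[ℝ] V₂} (hP : ¬ IsEntanglementBreaking C₁ C₂ P) :
    ∃ Q : V₂ →ₗ[ℝ] V₁, MapsTo Q C₂ C₁ ∧ LinearMap.trace ℝ V₁ (Q ∘ₗ P) < 0 := by
  let K : ProperCone ℝ (V₁ →L[ℝ] V₂) :=
    { (PointedCone.hull ℝ (positiveRankOneMaps C₁ C₂)).comap (ContinuousLinearMap.coeLM ℝ) with
      isClosed' := by
        convert isClosed_setOf_isEntanglementBreaking hC₁ hC₂
        ext T
        exact isEntanglementBreaking_iff_mem_hull.symm }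
  have hPK : LinearMap.toContinuousLinearMap P ∉ K :=
    fun h => hP (isEntanglementBreaking_iff_mem_hull.2 h)
  obtain ⟨f, hf, hfP⟩ := K.hyperplane_separation_point hPK
  obtain ⟨Q, hQ⟩ := exists_forall_trace_comp_eq
    (f.toLinearMap ∘ₗ (LinearMap.toContinuousLinearMap (𝕜 := ℝ) (E := V₁) (F' := V₂)).toLinearMap)
  refine ⟨Q, fun x hx => hC₁.mem_of_forall_dual_nonneg fun φ hφ => ?_, (hQ P).trans_lt hfP⟩
  have hrank : φ.smulRight x ∈ positiveRankOneMaps C₁ C₂ := ⟨φ, hφ, x, hx, rfl⟩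
  rw [← trace_comp_smulRight, hQ]
  exact hf _ (PointedCone.subset_hull hrank)

/-! ### Entanglement annihilating maps -/

section Annihilating

variable {V₁ V₂ V₃ : Type*} [AddCommGroup V₁] [Module ℝ V₁] [AddCommGroup V₂] [Module ℝ V₂]
  [AddCommGroup V₃] [Module ℝ V₃] {C₁ : Set V₁} {C₂ : Set V₂} {C₃ : Set V₃}

theorem mapsTo_piTensorProductMap_maxTensorPow {k : ℕ} {F : Fin k → V₁ →ₗ[ℝ] V₂}
    (hF : ∀ i, MapsTo (F i) C₁ C₂) :
    MapsTo (PiTensorProduct.map F) (maxTensorPow C₁ k) (maxTensorPow C₂ k) := by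
  intro z hz φ hφ
  have hpull : dualPairing φ ∘ₗ PiTensorProduct.map F = dualPairing fun i => φ i ∘ₗ F i :=
    PiTensorProduct.lift_comp_map _ _
  rw [← LinearMap.comp_apply, hpull]
  exact hz _ fun i x hx => hφ i _ (hF i hx)

theorem mapsTo_piTensorProductMap_minTensorPow {k : ℕ} {F : Fin k → V₁ →ₗ[ℝ] V₂}
    (hF : ∀ i, MapsTo (F i) C₁ C₂) :
    MapsTo (PiTensorProduct.map F) (minTensorPow C₁ k) (minTensorPow C₂ k) := by
  refine convexHull_min ?_ ((convex_convexHull ℝ _).linear_preimage (PiTensorProduct.map F))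
  rintro _ ⟨x, hx, rfl⟩
  exact subset_convexHull ℝ _
    ⟨fun i => F i (x i), fun i => hF i (hx i), PiTensorProduct.map_tprod F x⟩

theorem tprod_mem_maxTensorPow {k : ℕ} {x : Fin k → V₁} (hx : ∀ i, x i ∈ C₁) :
    PiTensorProduct.tprod ℝ x ∈ maxTensorPow C₁ k := by
  intro φ hφ
  simp only [dualPairing, PiTensorProduct.lift.tprod, MultilinearMap.compLinearMap_apply,
    MultilinearMap.mkPiAlgebra_apply]
  exact Finset.prod_nonneg fun i _ => hφ i _ (hx i)

namespace IsEntanglementAnnihilating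

theorem comp_left {R : V₁ →ₗ[ℝ] V₂} (hR : IsEntanglementAnnihilating C₁ C₂ R) {Q : V₂ →ₗ[ℝ] V₃}
    (hQ : MapsTo Q C₂ C₃) : IsEntanglementAnnihilating C₁ C₃ (Q ∘ₗ R) := by
  intro k hk z hz
  rw [PiTensorProduct.map_comp]
  exact mapsTo_piTensorProductMap_minTensorPow (fun _ => hQ) (hR k hk hz)

theorem mapsTo {R : V₁ →ₗ[ℝ] V₂} (hR : IsEntanglementAnnihilating C₁ C₂ R)
    (hC₂ : Convex ℝ C₂) : MapsTo R C₁ C₂ := by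
  intro x hx
  let e : (⨂[ℝ] _ : Fin 1, V₂) ≃ₗ[ℝ] V₂ := PiTensorProduct.subsingletonEquiv 0
  have hsub : minTensorPow C₂ 1 ⊆ e.toLinearMap ⁻¹' C₂ := by
    refine convexHull_min ?_ (hC₂.linear_preimage e.toLinearMap)
    rintro _ ⟨y, hy, rfl⟩
    simpa [e] using hy 0
  simpa [e] using hsub (hR 1 le_rfl (tprod_mem_maxTensorPow fun _ => hx))

/-- Expanding the tensor power of a convex combination of maps `A ∘ R ∘ D` gives a convex
combination of the maps `(⨂ Aᵢ) ∘ R^{⊗k} ∘ (⨂ Dᵢ)`. -/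
theorem of_mem_convexHull {R : V₁ →ₗ[ℝ] V₂} (hR : IsEntanglementAnnihilating C₁ C₂ R)
    {T : V₁ →ₗ[ℝ] V₂} (hT : T ∈ convexHull ℝ {S | ∃ A : V₂ →ₗ[ℝ] V₂, ∃ D : V₁ →ₗ[ℝ] V₁,
      MapsTo A C₂ C₂ ∧ MapsTo D C₁ C₁ ∧ S = A ∘ₗ R ∘ₗ D}) :
    IsEntanglementAnnihilating C₁ C₂ T := by
  obtain ⟨ι, _, w, S, hw, hw₁, hS, rfl⟩ := mem_convexHull_iff_exists_fintype.1 hT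
  choose A D hA hD hS using hS
  obtain rfl : S = fun i => A i ∘ₗ R ∘ₗ D i := funext hS
  classical
  intro k hk z hz
  have hexpand : PiTensorProduct.map (fun _ : Fin k => ∑ i, w i • (A i ∘ₗ R ∘ₗ D i)) =
      ∑ r : Fin k → ι, (∏ j, w (r j)) • (PiTensorProduct.map (fun j => A (r j)) ∘ₗ
        PiTensorProduct.map (fun _ => R) ∘ₗ PiTensorProduct.map (fun j => D (r j))) := by
    rw [← PiTensorProduct.mapMultilinear_apply, MultilinearMap.map_sum]
    simp only [MultilinearMap.map_smul_univ, PiTensorProduct.mapMultilinear_apply,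
      PiTensorProduct.map_comp]
  rw [hexpand]
  simp only [LinearMap.sum_apply, LinearMap.smul_apply, LinearMap.comp_apply]
  refine (convex_convexHull ℝ _).sum_mem (fun r _ => Finset.prod_nonneg fun j _ => hw _) ?_
    fun r _ => ?_
  · rw [← Fintype.prod_sum fun _ => w]
    simp only [hw₁, Finset.prod_const_one]
  · exact mapsTo_piTensorProductMap_minTensorPow (fun j => hA (r j))
      (hR k hk (mapsTo_piTensorProductMap_maxTensorPow (fun j => hD (r j)) hz))

end IsEntanglementAnnihilating

end Annihilating

/-! ### Twirling -/

section Twirling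

variable {m : Type*} [Fintype m]

theorem strictConvexOn_trace_conjTranspose_mul_self :
    StrictConvexOn ℝ univ fun X : Matrix m m ℝ => (star X * X).trace := by
  refine ⟨convex_univ, fun X _ Y _ hXY a b ha hb hab => ?_⟩
  have hdefect : 0 < (star (X - Y) * (X - Y)).trace := by
    refine (Matrix.posSemidef_conjTranspose_mul_self (X - Y)).trace_nonneg.lt_of_ne' fun h => ?_
    exact hXY (sub_eq_zero.1 (Matrix.trace_conjTranspose_mul_self_eq_zero_iff.1 h))
  obtain rfl : b = 1 - a := by linarith
  have hidentity : (star (a • X + (1 - a) • Y) * (a • X + (1 - a) • Y)).trace =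
      a • (star X * X).trace + (1 - a) • (star Y * Y).trace -
        a * (1 - a) * (star (X - Y) * (X - Y)).trace := by
    simp only [star_add, star_sub, star_smul, star_trivial, add_mul, mul_add, sub_mul, mul_sub,
      Matrix.smul_mul, Matrix.mul_smul, Matrix.trace_add, Matrix.trace_sub, Matrix.trace_smul,
      smul_eq_mul]
    ring
  exact hidentity.trans_lt <| sub_lt_self _ (by positivity)

variable [DecidableEq m]

theorem trace_conj_of_mem_orthogonalGroup {g : Matrix m m ℝ} (hg : g ∈ Matrix.orthogonalGroup m ℝ)
    (X : Matrix m m ℝ) : (g * X * star g).trace = X.trace := by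
  rw [Matrix.trace_mul_comm, ← mul_assoc, Unitary.star_mul_self_of_mem hg, one_mul]

/-- The element of minimal Hilbert-Schmidt norm in the convex hull of the orbit is unique, hence
fixed. -/
theorem exists_mem_convexHull_conj_commute {G : Submonoid (Matrix m m ℝ)}
    (hG : G ≤ Matrix.orthogonalGroup m ℝ) (hGc : IsCompact (G : Set (Matrix m m ℝ)))
    (R : Matrix m m ℝ) :
    ∃ T ∈ convexHull ℝ ((fun g => g * R * star g) '' G), ∀ g ∈ G, Commute g T := by
  let K := convexHull ℝ ((fun g => g * R * star g) '' (G : Set (Matrix m m ℝ)))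
  have hK : IsCompact K := isCompact_convexHull (hGc.image (by fun_prop))
  have hKne : K.Nonempty := (Set.Nonempty.image _ ⟨1, G.one_mem⟩).convexHull
  obtain ⟨T, hT, hmin⟩ := hK.exists_isMinOn hKne
    (f := fun X : Matrix m m ℝ => (star X * X).trace) (by fun_prop)
  have hconj : ∀ g ∈ G, g * T * star g ∈ K := fun g hg => by
    let conj : Matrix m m ℝ →ₗ[ℝ] Matrix m m ℝ :=
      LinearMap.mulRight ℝ (star g) ∘ₗ LinearMap.mulLeft ℝ g
    suffices K ⊆ conj ⁻¹' K from this hT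
    refine convexHull_min ?_ ((convex_convexHull ℝ _).linear_preimage conj)
    rintro _ ⟨h, hh, rfl⟩
    exact subset_convexHull ℝ _ ⟨g * h, G.mul_mem hg hh, by simp [conj, mul_assoc]⟩
  refine ⟨T, hT, fun g hg => ?_⟩
  have hgg : star g * g = 1 := Unitary.star_mul_self_of_mem (hG hg)
  have hnorm : (star (g * T * star g) * (g * T * star g)).trace = (star T * T).trace := by
    rw [← trace_conj_of_mem_orthogonalGroup (hG hg) (star T * T)]
    simp only [star_mul, star_star, mul_assoc, ← mul_assoc (star g) g, hgg, one_mul]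
  have hfix : g * T * star g = T := by
    refine (strictConvexOn_trace_conjTranspose_mul_self.subset (subset_univ K)
      (convex_convexHull ℝ _)).eq_of_isMinOn (fun X hX => ?_) hmin (hconj g hg) hT
    exact hnorm.trans_le (hmin hX)
  calc g * T = g * T * (star g * g) := by rw [hgg, mul_one]
    _ = T * g := by rw [← mul_assoc, hfix]

theorem trace_eq_of_mem_convexHull_conj {s : Set (Matrix m m ℝ)}
    (hs : s ⊆ Matrix.orthogonalGroup m ℝ) {R T : Matrix m m ℝ}
    (hT : T ∈ convexHull ℝ ((fun g => g * R * star g) '' s)) : T.trace = R.trace := by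
  refine convexHull_min (t := {X | X.trace = R.trace}) ?_ ?_ hT
  · rintro _ ⟨g, hg, rfl⟩
    exact trace_conj_of_mem_orthogonalGroup (hs hg) R
  · exact (convex_singleton R.trace).linear_preimage (Matrix.traceLinearMap m ℝ ℝ)

end Twirling

/-! ### Symmetries of the cone over a convex body -/

section Symmetries

open scoped Matrix

variable {n : ℕ} {B : Set (Fin n → ℝ)}

theorem mem_isoSet_iff {g : Matrix (Fin n) (Fin n) ℝ} :
    g ∈ isoSet n B ↔ g ∈ Matrix.orthogonalGroup (Fin n) ℝ ∧
      MapsTo g.mulVec B B ∧ MapsTo gᵀ.mulVec B B := by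
  refine and_congr_right fun hg => ?_
  have hinv : Function.LeftInverse gᵀ.mulVec g.mulVec := fun x => by
    rw [Matrix.mulVec_mulVec, (Matrix.mem_orthogonalGroup_iff' _ _).1 hg, Matrix.one_mulVec]
  have hinv' : Function.RightInverse gᵀ.mulVec g.mulVec := fun x => by
    rw [Matrix.mulVec_mulVec, (Matrix.mem_orthogonalGroup_iff _ _).1 hg, Matrix.one_mulVec]
  rw [subset_antisymm_iff]
  refine and_congr mapsTo_iff_image_subset.symm ?_
  rw [image_eq_preimage_of_inverse hinv hinv']
  rfl

theorem transpose_mem_isoSet {g : Matrix (Fin n) (Fin n) ℝ} (hg : g ∈ isoSet n B) :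
    gᵀ ∈ isoSet n B := by
  obtain ⟨hg, hB, hB'⟩ := mem_isoSet_iff.1 hg
  exact mem_isoSet_iff.2 ⟨Unitary.star_mem hg, hB', by rwa [Matrix.transpose_transpose]⟩

theorem isCompact_isoSet (hB : IsClosed B) : IsCompact (isoSet n B) := by
  have hbox : IsCompact (univ.pi fun _ : Fin n => univ.pi fun _ : Fin n => Icc (-1 : ℝ) 1) :=
    isCompact_univ_pi fun _ => isCompact_univ_pi fun _ => isCompact_Icc
  refine hbox.of_isClosed_subset ?_ fun g hg i _ j _ =>
    abs_le.1 (entry_norm_bound_of_unitary (𝕜 := ℝ) hg.1 i j)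
  have heq : isoSet n B = {g | gᵀ * g = 1} ∩
      ⋂ x ∈ B, {g | g.mulVec x ∈ B} ∩ {g | gᵀ.mulVec x ∈ B} := by
    ext g
    simp [mem_isoSet_iff, Matrix.mem_orthogonalGroup_iff', MapsTo, forall_and]
  rw [heq]
  exact (isClosed_eq (by fun_prop) continuous_const).inter <| isClosed_biInter fun x _ =>
    (hB.preimage (by fun_prop)).inter (hB.preimage (by fun_prop))

theorem eq_zero_of_forall_mulVec_eq (hn : 2 ≤ n) (hsym : EnoughSymmetries n B) {v : Fin n → ℝ}
    (hv : ∀ g ∈ isoSet n B, g *ᵥ v = v) : v = 0 := by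
  obtain ⟨c, hc⟩ := hsym (Matrix.vecMulVec v v) fun g hg => by
    rw [Matrix.mul_vecMulVec, Matrix.vecMulVec_mul, hv g hg, ← Matrix.mulVec_transpose,
      hv _ (transpose_mem_isoSet hg)]
  have hentry : ∀ i j, v i * v j = c * (1 : Matrix (Fin n) (Fin n) ℝ) i j := fun i j =>
    congrFun (congrFun hc i) j
  have : Nontrivial (Fin n) := Fin.nontrivial_iff_two_le.2 hn
  ext i
  obtain ⟨j, hji⟩ := exists_ne i
  have hii := hentry i i
  have hjj := hentry j j
  have hij := hentry i j
  rw [Matrix.one_apply_eq, mul_one] at hii hjj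
  rw [Matrix.one_apply_ne hji.symm, mul_zero] at hij
  rcases mul_eq_zero.1 hij with hi | hj
  · exact hi
  · rw [hj, mul_zero] at hjj
    rwa [← hjj, mul_self_eq_zero] at hii

/-- The standard basis of `ℝ ⊕ ℝⁿ`. -/
def stdBasis (n : ℕ) : Module.Basis (Unit ⊕ Fin n) ℝ (ℝ × (Fin n → ℝ)) :=
  (Module.Basis.singleton Unit ℝ).prod (Pi.basisFun ℝ (Fin n))

/-- The block matrix `1 ⊕ g` of the action of `g` on the second summand of `ℝ ⊕ ℝⁿ`. -/
def suspension (g : Matrix (Fin n) (Fin n) ℝ) : Matrix (Unit ⊕ Fin n) (Unit ⊕ Fin n) ℝ :=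
  Matrix.fromBlocks 1 0 0 g

theorem toLin_fromBlocks_smul_one (a : ℝ) (D : Matrix (Fin n) (Fin n) ℝ) :
    Matrix.toLin (stdBasis n) (stdBasis n) (Matrix.fromBlocks (a • 1) 0 0 D) =
      LinearMap.prodMap (a • LinearMap.id) (Matrix.toLin' D) := by
  apply (LinearMap.toMatrix (stdBasis n) (stdBasis n)).injective
  rw [LinearMap.toMatrix_toLin]
  ext (i | i) (j | j) <;>
    simp [LinearMap.toMatrix_apply, stdBasis]

/-- The matrices `1 ⊕ g` with `g` in `Iso(B)`: a group of symmetries of the cone over `B`. -/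
def suspensionIso (n : ℕ) (B : Set (Fin n → ℝ)) :
    Submonoid (Matrix (Unit ⊕ Fin n) (Unit ⊕ Fin n) ℝ) where
  carrier := suspension '' isoSet n B
  one_mem' := ⟨1, mem_isoSet_iff.2 ⟨one_mem _, fun x hx => by simpa using hx,
    fun x hx => by simpa using hx⟩, by simp [suspension]⟩
  mul_mem' := by
    rintro _ _ ⟨g, hg, rfl⟩ ⟨h, hh, rfl⟩
    obtain ⟨hg, hgB, hgB'⟩ := mem_isoSet_iff.1 hg
    obtain ⟨hh, hhB, hhB'⟩ := mem_isoSet_iff.1 hh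
    refine ⟨g * h, mem_isoSet_iff.2 ⟨mul_mem hg hh, fun x hx => ?_, fun x hx => ?_⟩,
      by simp [suspension, Matrix.fromBlocks_multiply]⟩
    · rw [← Matrix.mulVec_mulVec]
      exact hgB (hhB hx)
    · rw [Matrix.transpose_mul, ← Matrix.mulVec_mulVec]
      exact hhB' (hgB' hx)

theorem suspensionIso_le_orthogonalGroup :
    suspensionIso n B ≤ Matrix.orthogonalGroup (Unit ⊕ Fin n) ℝ := by
  rintro _ ⟨g, hg, rfl⟩
  have hgg := (Matrix.mem_orthogonalGroup_iff' _ _).1 hg.1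
  rw [Matrix.mem_orthogonalGroup_iff']
  simp [suspension, Matrix.fromBlocks_transpose, Matrix.fromBlocks_multiply, hgg]

theorem isCompact_suspensionIso (hB : IsClosed B) :
    IsCompact (suspensionIso n B : Set (Matrix (Unit ⊕ Fin n) (Unit ⊕ Fin n) ℝ)) :=
  (isCompact_isoSet hB).image (by unfold suspension; fun_prop)

theorem star_mem_suspensionIso {g : Matrix (Unit ⊕ Fin n) (Unit ⊕ Fin n) ℝ}
    (hg : g ∈ suspensionIso n B) : star g ∈ suspensionIso n B := by
  obtain ⟨g, hg, rfl⟩ := hg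
  refine ⟨gᵀ, transpose_mem_isoSet hg, ?_⟩
  simp [suspension, Matrix.star_eq_conjTranspose, Matrix.fromBlocks_transpose]

theorem mapsTo_toLin_of_mem_suspensionIso {g : Matrix (Unit ⊕ Fin n) (Unit ⊕ Fin n) ℝ}
    (hg : g ∈ suspensionIso n B) :
    MapsTo (Matrix.toLin (stdBasis n) (stdBasis n) g) (coneOverBody n B) (coneOverBody n B) := by
  obtain ⟨g, hg, rfl⟩ := hg
  rintro p ⟨ht, b, hb, hp⟩
  have hlin := toLin_fromBlocks_smul_one 1 g
  rw [one_smul] at hlin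
  rw [suspension, hlin]
  exact ⟨by simpa using ht, g *ᵥ b, (mem_isoSet_iff.1 hg).2.1 hb, by simp [← hp]⟩

theorem exists_toLin_eq_isotropicMap (hn : 2 ≤ n) (hsym : EnoughSymmetries n B)
    {T : Matrix (Unit ⊕ Fin n) (Unit ⊕ Fin n) ℝ} (hT : ∀ g ∈ suspensionIso n B, Commute g T) :
    ∃ α β : ℝ, Matrix.toLin (stdBasis n) (stdBasis n) T = isotropicMap n α β := by
  have hblocks : ∀ g ∈ isoSet n B, T.toBlocks₁₂ = T.toBlocks₁₂ * g ∧
      g * T.toBlocks₂₁ = T.toBlocks₂₁ ∧ g * T.toBlocks₂₂ = T.toBlocks₂₂ * g := fun g hg => by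
    have hcomm := (hT _ ⟨g, hg, rfl⟩).eq
    rw [← Matrix.fromBlocks_toBlocks T, suspension, Matrix.fromBlocks_multiply,
      Matrix.fromBlocks_multiply, Matrix.fromBlocks_inj] at hcomm
    simpa using hcomm
  obtain ⟨β, hβ⟩ := hsym T.toBlocks₂₂ fun g hg => (hblocks g hg).2.2
  have h₁₂ : T.toBlocks₁₂ = 0 := by
    ext i j
    refine congrFun (eq_zero_of_forall_mulVec_eq hn hsym (v := T.toBlocks₁₂ i) fun g hg => ?_) j
    rw [← Matrix.vecMul_transpose]
    exact (congrFun (hblocks _ (transpose_mem_isoSet hg)).1 i).symm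
  have h₂₁ : T.toBlocks₂₁ = 0 := by
    ext i j
    refine congrFun (eq_zero_of_forall_mulVec_eq hn hsym (v := T.toBlocks₂₁.col j) fun g hg => ?_) i
    exact congrArg (Matrix.col · j) (hblocks g hg).2.1
  have h₁₁ : T.toBlocks₁₁ = T.toBlocks₁₁ () () • (1 : Matrix Unit Unit ℝ) := by
    ext i j
    simp
  refine ⟨T.toBlocks₁₁ () (), β, ?_⟩
  conv_lhs => rw [← Matrix.fromBlocks_toBlocks T, h₁₂, h₂₁, hβ, h₁₁, toLin_fromBlocks_smul_one]
  simp [isotropicMap]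

theorem exists_isEntanglementAnnihilating_isotropicMap_trace_eq (hn : 2 ≤ n) (hB : IsClosed B)
    (hsym : EnoughSymmetries n B) {R : (ℝ × (Fin n → ℝ)) →ₗ[ℝ] (ℝ × (Fin n → ℝ))}
    (hR : IsEntanglementAnnihilating (coneOverBody n B) (coneOverBody n B) R) :
    ∃ α β : ℝ, IsEntanglementAnnihilating (coneOverBody n B) (coneOverBody n B)
        (isotropicMap n α β) ∧
      LinearMap.trace ℝ _ (isotropicMap n α β) = LinearMap.trace ℝ _ R := by
  let b := stdBasis n
  obtain ⟨T, hT, hcomm⟩ := exists_mem_convexHull_conj_commute suspensionIso_le_orthogonalGroup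
    (isCompact_suspensionIso hB) (LinearMap.toMatrix b b R)
  obtain ⟨α, β, hαβ⟩ := exists_toLin_eq_isotropicMap hn hsym hcomm
  refine ⟨α, β, ?_, ?_⟩ <;> rw [← hαβ]
  · refine hR.of_mem_convexHull ?_
    have himage := mem_image_of_mem (Matrix.toLin b b).toLinearMap hT
    rw [LinearMap.image_convexHull, image_image] at himage
    refine convexHull_mono ?_ himage
    rintro _ ⟨g, hg, rfl⟩
    refine ⟨_, _, mapsTo_toLin_of_mem_suspensionIso hg,
      mapsTo_toLin_of_mem_suspensionIso (star_mem_suspensionIso hg), ?_⟩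
    change Matrix.toLin b b (g * LinearMap.toMatrix b b R * star g) = _
    rw [Matrix.toLin_mul b b b, Matrix.toLin_mul b b b,
      Matrix.toLin_toMatrix, LinearMap.comp_assoc]
  · rw [Matrix.trace_toLin_eq, LinearMap.trace_eq_matrix_trace ℝ b R,
      trace_eq_of_mem_convexHull_conj suspensionIso_le_orthogonalGroup hT]

end Symmetries

/-! ### The cone over a convex body -/

theorem exists_sub_eq_of_interior_nonempty {E : Type*} [AddCommGroup E] [Module ℝ E]
    [TopologicalSpace E] [IsTopologicalAddGroup E] [ContinuousSMul ℝ E] {C : Set E}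
    (hsmul : ∀ ⦃c : ℝ⦄, 0 < c → ∀ ⦃x⦄, x ∈ C → c • x ∈ C) (hC : (interior C).Nonempty) (v : E) :
    ∃ x ∈ C, ∃ y ∈ C, v = x - y := by
  obtain ⟨u, hu⟩ := hC
  have hlim : Filter.Tendsto (fun ε : ℝ => u + ε • v) (nhdsWithin 0 (Ioi 0)) (nhds u) := by
    have hcont : Continuous fun ε : ℝ => u + ε • v := by fun_prop
    simpa using (hcont.tendsto 0).mono_left nhdsWithin_le_nhds
  obtain ⟨ε, hε_mem, hε⟩ :=
    ((hlim.eventually_mem (mem_interior_iff_mem_nhds.1 hu)).and self_mem_nhdsWithin).exists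
  have hε₀ : (0 : ℝ) < ε := hε
  refine ⟨ε⁻¹ • (u + ε • v), hsmul (inv_pos.2 hε₀) hε_mem, ε⁻¹ • u,
    hsmul (inv_pos.2 hε₀) (interior_subset hu), ?_⟩
  rw [smul_add, inv_smul_smul₀ hε₀.ne', add_sub_cancel_left]

section ConeOverBody

variable {n : ℕ} {B : Set (Fin n → ℝ)}

theorem coneOverBody_eq_hull (hB : Convex ℝ B) (hne : B.Nonempty) :
    coneOverBody n B = (PointedCone.hull ℝ ({(1 : ℝ)} ×ˢ B) : Set (ℝ × (Fin n → ℝ))) := by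
  ext ⟨t, x⟩
  rw [SetLike.mem_coe, mem_hull_iff_exists_smul_mem_convexHull ((singleton_nonempty 1).prod hne),
    ((convex_singleton 1).prod hB).convexHull_eq]
  simp [coneOverBody, mem_smul_set]

theorem isClosed_coneOverBody (hB : IsCompact B) (hconv : Convex ℝ B) (hne : B.Nonempty) :
    IsClosed (coneOverBody n B) := by
  rw [coneOverBody_eq_hull hconv hne]
  refine isClosed_hull_of_isCompact (isCompact_singleton.prod hB) ?_
  rw [((convex_singleton 1).prod hconv).convexHull_eq]
  simp

theorem interior_coneOverBody_nonempty (hB : (interior B).Nonempty) :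
    (interior (coneOverBody n B)).Nonempty := by
  obtain ⟨b, hb⟩ := hB
  refine ⟨(1, b), mem_interior_iff_mem_nhds.2 ?_⟩
  have hcont : ContinuousAt (fun p : ℝ × (Fin n → ℝ) => p.1⁻¹ • p.2) (1, b) :=
    (continuousAt_fst.inv₀ one_ne_zero).smul continuousAt_snd
  have hmem : ∀ᶠ p in nhds ((1 : ℝ), b), p.1⁻¹ • p.2 ∈ B :=
    hcont.eventually_mem (by simpa using mem_interior_iff_mem_nhds.1 hb)
  have hpos : ∀ᶠ p in nhds ((1 : ℝ), b), 0 < p.1 :=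
    continuousAt_fst.eventually_const_lt one_pos
  filter_upwards [hmem, hpos] with p hp hp₀
  exact ⟨hp₀.le, (mem_smul_set_iff_inv_smul_mem₀ hp₀.ne' _ _).2 hp⟩

theorem isProperCone_coneOverBody (hB : IsConvexBody n B) : IsProperCone (coneOverBody n B) := by
  obtain ⟨hcomp, hconv, hint⟩ := hB
  have hne : B.Nonempty := hint.mono interior_subset
  have hhull := coneOverBody_eq_hull hconv hne
  have hsmul : ∀ ⦃c : ℝ⦄, 0 < c → ∀ ⦃x⦄, x ∈ coneOverBody n B → c • x ∈ coneOverBody n B := by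
    rw [hhull]
    exact fun c hc x hx => PointedCone.smul_mem _ hc.le hx
  refine ⟨isClosed_coneOverBody hcomp hconv hne, by rw [hhull]; exact PointedCone.convex _, hsmul,
    exists_sub_eq_of_interior_nonempty hsmul (interior_coneOverBody_nonempty hint), ?_⟩
  refine subset_antisymm ?_ ?_
  · rintro ⟨t, x⟩ ⟨⟨ht, hx⟩, ht', -⟩
    obtain rfl : t = 0 := le_antisymm (neg_nonneg.1 ht') ht
    rw [zero_smul_set hne] at hx
    exact Prod.ext rfl hx
  · rw [hhull, singleton_subset_iff]
    exact ⟨Submodule.zero_mem _, by simp⟩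

theorem exists_isLeast_isGreatest_of_isConvexBody_one {B : Set (Fin 1 → ℝ)}
    (hB : IsConvexBody 1 B) : ∃ p q, IsLeast B p ∧ IsGreatest B q ∧ p 0 < q 0 := by
  obtain ⟨hcomp, -, b, hb⟩ := hB
  have hne : B.Nonempty := ⟨b, interior_subset hb⟩
  have hcont : ContinuousOn (fun x : Fin 1 → ℝ => x 0) B := by fun_prop
  obtain ⟨p, hp, hp_min⟩ := hcomp.exists_isMinOn hne hcont
  obtain ⟨q, hq, hq_max⟩ := hcomp.exists_isMaxOn hne hcont
  refine ⟨p, q, ⟨hp, fun x hx i => Subsingleton.elim 0 i ▸ hp_min hx⟩,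
    ⟨hq, fun x hx i => Subsingleton.elim 0 i ▸ hq_max hx⟩, ?_⟩
  have := Module.punctured_nhds_neBot ℝ (Fin 1 → ℝ) b
  obtain ⟨x, hx, y, hy, hxy⟩ := (infinite_of_mem_nhds b (mem_interior_iff_mem_nhds.1 hb)).nontrivial
  by_contra! hqp
  refine hxy (funext fun i => ?_)
  have hval : ∀ z ∈ B, z 0 = p 0 := fun z hz => le_antisymm ((hq_max hz).trans hqp) (hp_min hz)
  rw [Subsingleton.elim i 0, hval x hx, hval y hy]

/-- The cone over the segment `[p, q]` is spanned by `(1, p)` and `(1, q)`, and the coordinates of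
`(t, x)` in this basis are `(t q - x) / (q - p)` and `(x - t p) / (q - p)`. -/
theorem isEntanglementBreaking_id_coneOverBody_one {B : Set (Fin 1 → ℝ)}
    (hB : IsConvexBody 1 B) :
    IsEntanglementBreaking (coneOverBody 1 B) (coneOverBody 1 B) LinearMap.id := by
  obtain ⟨p, q, hp, hq, hpq⟩ := exists_isLeast_isGreatest_of_isConvexBody_one hB
  have hd : 0 < q 0 - p 0 := sub_pos.2 hpq
  let t : Module.Dual ℝ (ℝ × (Fin 1 → ℝ)) := LinearMap.fst ℝ ℝ (Fin 1 → ℝ)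
  let x : Module.Dual ℝ (ℝ × (Fin 1 → ℝ)) := LinearMap.proj 0 ∘ₗ LinearMap.snd ℝ ℝ (Fin 1 → ℝ)
  have hvertex : ∀ b ∈ B, ((1 : ℝ), b) ∈ coneOverBody 1 B := fun b hb =>
    ⟨zero_le_one, by rwa [one_smul]⟩
  have hbounds : ∀ v ∈ coneOverBody 1 B, p 0 * t v ≤ x v ∧ x v ≤ q 0 * t v := by
    rintro v ⟨ht, b, hb, hv⟩
    have hx : x v = b 0 * t v := (congrFun hv.symm 0).trans (mul_comm _ _)
    rw [hx]
    exact ⟨mul_le_mul_of_nonneg_right (hp.2 hb 0) ht, mul_le_mul_of_nonneg_right (hq.2 hb 0) ht⟩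
  refine ⟨2, ![(q 0 - p 0)⁻¹ • (q 0 • t - x), (q 0 - p 0)⁻¹ • (x - p 0 • t)], ![(1, p), (1, q)],
    Fin.forall_fin_two.2 ⟨fun v hv => ?_, fun v hv => ?_⟩,
    Fin.forall_fin_two.2 ⟨hvertex p hp.1, hvertex q hq.1⟩, fun v => ?_⟩
  · exact mul_nonneg (inv_nonneg.2 hd.le) (sub_nonneg.2 (hbounds v hv).2)
  · exact mul_nonneg (inv_nonneg.2 hd.le) (sub_nonneg.2 (hbounds v hv).1)
  · rw [Fin.sum_univ_two]
    ext i
    · change t v = (q 0 - p 0)⁻¹ * (q 0 * t v - x v) * 1 + (q 0 - p 0)⁻¹ * (x v - p 0 * t v) * 1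
      field_simp
      ring
    · obtain rfl := Subsingleton.elim 0 i
      change x v = (q 0 - p 0)⁻¹ * (q 0 * t v - x v) * p 0 +
        (q 0 - p 0)⁻¹ * (x v - p 0 * t v) * q 0
      field_simp
      ring

end ConeOverBody

/-- **Corollary (resilience of cones with enough symmetries).** `C_B` is resilient iff every
entanglement annihilating isotropic map is entanglement breaking. -/
theorem coneOverBody_resilient_iff_isotropic
    (n : ℕ) (hn : 1 ≤ n) (B : Set (Fin n → ℝ)) (hB : IsConvexBody n B)
    (hsym : EnoughSymmetries n B) :
    IsResilientPair (coneOverBody n B) (coneOverBody n B) ↔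
      ∀ α β : ℝ,
        IsEntanglementAnnihilating (coneOverBody n B) (coneOverBody n B)
          (isotropicMap n α β) →
        IsEntanglementBreaking (coneOverBody n B) (coneOverBody n B)
          (isotropicMap n α β) := by
  refine ⟨fun h α β => h _, fun h P hP => ?_⟩
  have hC := isProperCone_coneOverBody hB
  rcases hn.eq_or_lt with rfl | hn
  · simpa only [LinearMap.comp_id] using
      (isEntanglementBreaking_id_coneOverBody_one hB).comp_left (hP.mapsTo hC.2.1)
  by_contra hP_not_breaking
  obtain ⟨Q, hQ, htrace⟩ := hC.exists_mapsTo_trace_comp_neg hC hP_not_breaking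
  obtain ⟨α, β, hαβ, htrace_eq⟩ := exists_isEntanglementAnnihilating_isotropicMap_trace_eq hn
    hB.1.isClosed hsym (hP.comp_left hQ)
  exact htrace.not_ge (htrace_eq ▸ (h α β hαβ).trace_nonneg)

end
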